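/- arXiv:0902.2308 — 4 statements merged into one kernel-verified Lean document; each statement's English description precedes it below -/
import Mathlib

section
/- Let n ≥ 2 be an integer, ω > 0 and c > 0 real numbers, and let A be the n×n real symmetric matrix with diagonal entries A_{rr} = ω² and off-diagonal entries A_{r,r+1} = A_{r+1,r} = −(c/2)√(r(n−r)) for r = 1,…,n−1 (all other entries zero). Then A is positive definite if and only if c < 2ω²/(n−1). -/
open Finset Matrix

/-- The quadratic form of the tridiagonal matrix, as a sum over neighbouring indices. -/
lemma kraw_quad (m : ℕ) (w c : ℝ) (b : ℕ → ℝ) (x : Fin (m + 1) → ℝ)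
    (A : Matrix (Fin (m + 1)) (Fin (m + 1)) ℝ)
    (hA : ∀ i j : Fin (m + 1), A i j =
      if (i : ℕ) = (j : ℕ) then w
      else if (i : ℕ) + 1 = (j : ℕ) then -(c / 2) * b i
      else if (j : ℕ) + 1 = (i : ℕ) then -(c / 2) * b j
      else 0) :
    x ⬝ᵥ (A *ᵥ x) = w * ∑ i, x i ^ 2
      - c * ∑ i : Fin m, b i * (x i.castSucc * x i.succ) := by
  have key : ∀ g : Fin (m + 1) → Fin (m + 1) → ℝ,
      ∑ i : Fin (m + 1), ∑ j : Fin (m + 1), (if (i : ℕ) + 1 = (j : ℕ) then g i j else 0)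
        = ∑ i : Fin m, g i.castSucc i.succ := by
    intro g
    rw [Fin.sum_univ_castSucc]
    have h0 : ∑ j : Fin (m + 1),
        (if ((Fin.last m : Fin (m + 1)) : ℕ) + 1 = (j : ℕ) then g (Fin.last m) j else 0) = 0 := by
      apply Finset.sum_eq_zero
      intro j _
      rw [if_neg]
      have := j.isLt
      simp only [Fin.val_last]
      omega
    rw [h0, add_zero]
    apply Finset.sum_congr rfl
    intro i _
    rw [Finset.sum_eq_single i.succ]
    · simp
    · intro j _ hj
      rw [if_neg]
      intro h
      apply hj
      ext
      simp at h ⊢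
      omega
    · simp
  have e : x ⬝ᵥ (A *ᵥ x) = ∑ i : Fin (m + 1), ∑ j : Fin (m + 1), (if (i : ℕ) = (j : ℕ) then w * x i ^ 2 else 0)
      + ∑ i : Fin (m + 1), ∑ j : Fin (m + 1), (if (i : ℕ) + 1 = (j : ℕ) then -(c / 2) * b i * (x i * x j) else 0)
      + ∑ i : Fin (m + 1), ∑ j : Fin (m + 1), (if (j : ℕ) + 1 = (i : ℕ) then -(c / 2) * b j * (x j * x i) else 0) := by
    simp only [dotProduct, mulVec, Finset.mul_sum, ← Finset.sum_add_distrib]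
    apply Finset.sum_congr rfl
    intro i _
    apply Finset.sum_congr rfl
    intro j _
    rw [hA]
    by_cases h1 : (i : ℕ) = (j : ℕ)
    · have : i = j := Fin.ext h1
      subst this
      simp
      ring
    · by_cases h2 : (i : ℕ) + 1 = (j : ℕ)
      · rw [if_neg h1, if_pos h2, if_neg h1, if_pos h2, if_neg (by omega)]
        ring
      · by_cases h3 : (j : ℕ) + 1 = (i : ℕ)
        · rw [if_neg h1, if_neg h2, if_pos h3, if_neg h1, if_neg h2, if_pos h3]
          ring
        · simp [h1, h2, h3]
  have key' : ∑ i : Fin (m + 1), ∑ j : Fin (m + 1),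
      (if (j : ℕ) + 1 = (i : ℕ) then -(c / 2) * b j * (x j * x i) else 0)
      = ∑ i : Fin m, -(c / 2) * b i.castSucc * (x i.castSucc * x i.succ) := by
    rw [Finset.sum_comm]
    exact key (fun i j => -(c / 2) * b i * (x i * x j))
  rw [e, key (fun i j => -(c / 2) * b i * (x i * x j)), key']
  have hd : ∑ i : Fin (m + 1), ∑ j : Fin (m + 1), (if (i : ℕ) = (j : ℕ) then w * x i ^ 2 else 0)
      = w * ∑ i, x i ^ 2 := by
    simp [Fin.val_inj, Finset.mul_sum]
  rw [hd, Finset.mul_sum (s := (Finset.univ : Finset (Fin m))), add_assoc,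
    ← Finset.sum_add_distrib, sub_eq_add_neg, ← Finset.sum_neg_distrib]
  congr 1
  apply Finset.sum_congr rfl
  intro i _
  simp only [Fin.val_castSucc]
  ring

/-- The weighted sums of squares add up to `m` times the sum of squares. -/
lemma kraw_weights (m : ℕ) (x : Fin (m + 1) → ℝ) :
    ∑ i : Fin m, (((m : ℝ) - (i : ℕ)) * x i.castSucc ^ 2 + (((i : ℕ) : ℝ) + 1) * x i.succ ^ 2)
      = m * ∑ i, x i ^ 2 := by
  have h1 : ∑ i : Fin m, ((m : ℝ) - (i : ℕ)) * x i.castSucc ^ 2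
      = ∑ i : Fin (m + 1), ((m : ℝ) - (i : ℕ)) * x i ^ 2 := by
    rw [Fin.sum_univ_castSucc]; simp
  have h2 : ∑ i : Fin m, (((i : ℕ) : ℝ) + 1) * x i.succ ^ 2
      = ∑ i : Fin (m + 1), ((i : ℕ) : ℝ) * x i ^ 2 := by
    rw [Fin.sum_univ_succ]; simp
  rw [Finset.sum_add_distrib, h1, h2, ← Finset.sum_add_distrib, Finset.mul_sum]
  apply Finset.sum_congr rfl
  intro i _
  ring

/-- the interaction matrix of the Hamiltonian with Krawtchouk interaction
(diagonal entries `ω²`, off-diagonal entries `-(c/2)√(r(n-r))` for `r = 1,…,n-1`;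
the index `i : Fin n` corresponds to `r = i+1`) is positive definite if and only if
`c < 2ω²/(n-1)`. -/
theorem krawtchouk_interaction_posDef_iff (n : ℕ) (hn : 2 ≤ n) (ω c : ℝ)
    (hω : 0 < ω) (hc : 0 < c)
    (A : Matrix (Fin n) (Fin n) ℝ)
    (hA : ∀ i j : Fin n, A i j =
      if (i : ℕ) = (j : ℕ) then ω ^ 2
      else if (i : ℕ) + 1 = (j : ℕ) then
        -(c / 2) * Real.sqrt ((((i : ℕ) : ℝ) + 1) * ((n : ℝ) - (((i : ℕ) : ℝ) + 1)))
      else if (j : ℕ) + 1 = (i : ℕ) then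
        -(c / 2) * Real.sqrt ((((j : ℕ) : ℝ) + 1) * ((n : ℝ) - (((j : ℕ) : ℝ) + 1)))
      else 0) :
    A.PosDef ↔ c < 2 * ω ^ 2 / ((n : ℝ) - 1) := by
  obtain ⟨m, rfl⟩ : ∃ m, n = m + 1 := ⟨n - 1, by omega⟩
  have hm : (0 : ℝ) < m := by
    have : 0 < m := by omega
    exact_mod_cast this
  have hquad := fun x => kraw_quad m (ω ^ 2) c
    (fun k => Real.sqrt (((k : ℝ) + 1) * (((m + 1 : ℕ) : ℝ) - ((k : ℝ) + 1)))) x A hA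
  have hcond : c < 2 * ω ^ 2 / (((m + 1 : ℕ) : ℝ) - 1) ↔ 0 < ω ^ 2 - c * m / 2 := by
    push_cast
    rw [add_sub_cancel_right, lt_div_iff₀ hm]
    constructor <;> intro h <;> linarith
  have hsub : ∀ k : ℕ, ((m + 1 : ℕ) : ℝ) - ((k : ℝ) + 1) = (m : ℝ) - k := by
    intro k; push_cast; ring
  simp only [hsub] at hquad
  rw [hcond, Matrix.posDef_iff_dotProduct_mulVec]
  constructor
  · rintro ⟨-, hpos⟩
    have hx0 : (fun i : Fin (m + 1) => Real.sqrt (m.choose i)) ≠ 0 := by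
      intro h
      have := congrFun h 0
      simp at this
    have hp := hpos hx0
    rw [star_trivial, hquad] at hp
    have hw := kraw_weights m (fun i : Fin (m + 1) => Real.sqrt (m.choose i))
    have hs : ∑ i : Fin m, (((m : ℝ) - (i : ℕ)) * Real.sqrt (m.choose (i.castSucc : Fin (m+1))) ^ 2
          + (((i : ℕ) : ℝ) + 1) * Real.sqrt (m.choose (i.succ : Fin (m + 1))) ^ 2)
        = 2 * ∑ i : Fin m, Real.sqrt ((((i : ℕ) : ℝ) + 1) * ((m : ℝ) - (i : ℕ))) *
          (Real.sqrt (m.choose (i.castSucc : Fin (m + 1))) *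
            Real.sqrt (m.choose (i.succ : Fin (m + 1)))) := by
      rw [Finset.mul_sum]
      apply Finset.sum_congr rfl
      intro i _
      have hi : ((i : ℕ) : ℝ) ≤ m := by exact_mod_cast i.isLt.le
      have hi' : (0 : ℝ) ≤ (m : ℝ) - (i : ℕ) := by linarith
      have hch : ((m.choose ((i : ℕ) + 1) : ℕ) : ℝ) * (((i : ℕ) : ℝ) + 1)
          = (m.choose (i : ℕ) : ℝ) * ((m : ℝ) - (i : ℕ)) := by
        have := Nat.choose_succ_right_eq m (i : ℕ)
        rw [← Nat.cast_sub i.isLt.le]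
        exact_mod_cast this
      simp only [Fin.val_castSucc, Fin.val_succ]
      rw [Real.sq_sqrt (by positivity), Real.sq_sqrt (by positivity),
        ← Real.sqrt_mul (by positivity), ← Real.sqrt_mul (by positivity)]
      have : (((i : ℕ) : ℝ) + 1) * ((m : ℝ) - (i : ℕ)) *
          ((m.choose (i : ℕ) : ℝ) * (m.choose ((i : ℕ) + 1) : ℝ))
          = ((m.choose (i : ℕ) : ℝ) * ((m : ℝ) - (i : ℕ))) ^ 2 := by
        linear_combination ((m.choose (i : ℕ) : ℝ) * ((m : ℝ) - (i : ℕ))) * hch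
      rw [this, Real.sqrt_sq (by positivity)]
      linarith
    rw [hs] at hw
    have hS : 0 ≤ ∑ i : Fin (m + 1), Real.sqrt (m.choose i) ^ 2 := by positivity
    have hp2 : 0 < (ω ^ 2 - c * m / 2) * ∑ i : Fin (m + 1), Real.sqrt (m.choose i) ^ 2 := by
      refine lt_of_lt_of_eq hp ?_
      linear_combination (-c / 2) * hw
    exact pos_of_mul_pos_left hp2 hS
  · intro h
    refine ⟨?_, ?_⟩
    · ext i j
      rw [Matrix.conjTranspose_apply, star_trivial, hA, hA]
      by_cases h1 : (i : ℕ) = (j : ℕ)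
      · simp [h1]
      · by_cases h2 : (i : ℕ) + 1 = (j : ℕ)
        · rw [if_neg (by omega), if_neg (by omega), if_pos h2, if_neg h1, if_pos h2]
        · rw [if_neg (Ne.symm h1), if_neg h1, if_neg h2, if_neg h2]
    · intro x hx
      rw [star_trivial, hquad]
      have hS : 0 < ∑ i, x i ^ 2 := by
        obtain ⟨i, hi⟩ := Function.ne_iff.mp hx
        exact Finset.sum_pos' (fun i _ => sq_nonneg _) ⟨i, Finset.mem_univ _, by
          have : x i ≠ 0 := hi
          positivity⟩
      have hle : 2 * ∑ i : Fin m, Real.sqrt ((((i : ℕ) : ℝ) + 1) * ((m : ℝ) - (i : ℕ))) *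
          (x i.castSucc * x i.succ) ≤ m * ∑ i, x i ^ 2 := by
        rw [← kraw_weights, Finset.mul_sum]
        apply Finset.sum_le_sum
        intro i _
        have hi : ((i : ℕ) : ℝ) ≤ m := by exact_mod_cast i.isLt.le
        have hi' : (0 : ℝ) ≤ (m : ℝ) - (i : ℕ) := by linarith
        have hi1 : (0 : ℝ) ≤ ((i : ℕ) : ℝ) + 1 := by positivity
        rw [Real.sqrt_mul hi1]
        have e1 := Real.sq_sqrt hi'
        have e2 := Real.sq_sqrt hi1
        generalize Real.sqrt ((m : ℝ) - (i : ℕ)) = p at *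
        generalize Real.sqrt (((i : ℕ) : ℝ) + 1) = q at *
        rw [← e1, ← e2]
        nlinarith [sq_nonneg (p * x i.castSucc - q * x i.succ)]
      have := mul_pos h hS
      nlinarith [mul_le_mul_of_nonneg_left hle hc.le]
end

section
/- If β = −α with −1 < α < 1, then the diagonal recurrence coefficients of the Hahn polynomials satisfy A_i + C_i = (N − α)/2 for every i = 1,…,N, while A_0 + C_0 = N(α+1)/2. -/
/-- The Hahn recurrence coefficient
`A_i = (i+α+β+1)(i+α+1)(N-i)/((2i+α+β+1)(2i+α+β+2))` for `0 ≤ i < N`,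
with the convention `A_N = 0`. -/
noncomputable def hahnA (N : ℕ) (α β : ℝ) (i : ℕ) : ℝ :=
  if i = N then 0
  else ((i : ℝ) + α + β + 1) * ((i : ℝ) + α + 1) * ((N : ℝ) - (i : ℝ)) /
    ((2 * (i : ℝ) + α + β + 1) * (2 * (i : ℝ) + α + β + 2))

/-- The Hahn recurrence coefficient
`C_i = i(i+α+β+N+1)(i+β)/((2i+α+β)(2i+α+β+1))` for `1 ≤ i ≤ N`,
with the convention `C_0 = 0`. -/
noncomputable def hahnC (N : ℕ) (α β : ℝ) (i : ℕ) : ℝ :=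
  if i = 0 then 0
  else (i : ℝ) * ((i : ℝ) + α + β + (N : ℝ) + 1) * ((i : ℝ) + β) /
    ((2 * (i : ℝ) + α + β) * (2 * (i : ℝ) + α + β + 1))

/-- if `β = -α` with `-1 < α < 1`, then `A_i + C_i = (N-α)/2` for every
`i = 1,…,N`, while `A_0 + C_0 = N(α+1)/2`. -/
theorem hahn_diagonal_beta_eq_neg_alpha (N : ℕ) (hN : 1 ≤ N) (α β : ℝ)
    (hα1 : -1 < α) (hα2 : α < 1) (hβ : β = -α) :
    (∀ i : ℕ, 1 ≤ i → i ≤ N → hahnA N α β i + hahnC N α β i = ((N : ℝ) - α) / 2) ∧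
      hahnA N α β 0 + hahnC N α β 0 = (N : ℝ) * (α + 1) / 2 := by
  subst hβ
  refine ⟨fun i hi hiN => ?_, ?_⟩
  · have hpos : (0 : ℝ) < i := by exact_mod_cast hi
    have hA : hahnA N α (-α) i
        = ((i : ℝ) + α + 1) * ((N : ℝ) - i) / (2 * (2 * (i : ℝ) + 1)) := by
      unfold hahnA
      split_ifs with h
      · subst h
        simp
      · have e1 : (i : ℝ) + α + -α + 1 = i + 1 := by ring
        have e2 : 2 * (i : ℝ) + α + -α + 1 = 2 * i + 1 := by ring
        have e3 : 2 * (i : ℝ) + α + -α + 2 = 2 * (i + 1) := by ring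
        have h1 : (i : ℝ) + 1 ≠ 0 := by positivity
        have h2 : 2 * (i : ℝ) + 1 ≠ 0 := by positivity
        rw [e1, e2, e3, div_eq_div_iff (by positivity) (by positivity)]
        ring
    have hC : hahnC N α (-α) i
        = ((i : ℝ) + N + 1) * ((i : ℝ) - α) / (2 * (2 * (i : ℝ) + 1)) := by
      unfold hahnC
      rw [if_neg (by omega)]
      have e1 : (i : ℝ) + α + -α + N + 1 = i + N + 1 := by ring
      have e2 : 2 * (i : ℝ) + α + -α + 1 = 2 * i + 1 := by ring
      have e3 : 2 * (i : ℝ) + α + -α = 2 * i := by ring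
      rw [e1, e2, e3, div_eq_div_iff (by positivity) (by positivity)]
      ring
    rw [hA, hC, ← add_div, div_eq_div_iff (by positivity) (by positivity)]
    ring
  · have h : (0 : ℕ) ≠ N := by omega
    unfold hahnA hahnC
    rw [if_neg h, if_pos rfl]
    simp
    ring
end

section
/- If β = −2N−2−α with −2−N < α < −N, then the diagonal recurrence coefficients of the Hahn polynomials satisfy A_i + C_i = −(α+1)/2 for every i = 0,…,N−1, while A_N + C_N = N(N+α+2)/2. -/
/-- if `β = -2N-2-α` with `-2-N < α < -N`, then `A_i + C_i = -(α+1)/2`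
for every `i = 0,…,N-1`, while `A_N + C_N = N(N+α+2)/2`. -/
theorem hahn_diagonal_beta_eq_reflected (N : ℕ) (hN : 1 ≤ N) (α β : ℝ)
    (hα1 : -2 - (N : ℝ) < α) (hα2 : α < -(N : ℝ)) (hβ : β = -2 * (N : ℝ) - 2 - α) :
    (∀ i : ℕ, i < N → hahnA N α β i + hahnC N α β i = -(α + 1) / 2) ∧
      hahnA N α β N + hahnC N α β N = (N : ℝ) * ((N : ℝ) + α + 2) / 2 := by
  have hN0 : N ≠ 0 := by omega
  subst hβ
  constructor
  · intro i hi
    have hiR : (i : ℝ) < N := by exact_mod_cast hi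
    have h1 : 2 * (i : ℝ) - 2 * N - 1 ≠ 0 := by intro h; linarith
    have h2 : (i : ℝ) - N ≠ 0 := by intro h; linarith
    have h3 : (i : ℝ) - N - 1 ≠ 0 := by intro h; linarith
    have hA : hahnA N α (-2 * (N : ℝ) - 2 - α) i
        = -((i : ℝ) - 2 * N - 1) * (i + α + 1) / (2 * (2 * (i : ℝ) - 2 * N - 1)) := by
      rw [hahnA, if_neg (by omega)]
      rw [show (2 * (i : ℝ) + α + (-2 * (N : ℝ) - 2 - α) + 1) = 2 * (i : ℝ) - 2 * N - 1 by ring,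
        show (2 * (i : ℝ) + α + (-2 * (N : ℝ) - 2 - α) + 2) = 2 * ((i : ℝ) - N) by ring,
        div_eq_div_iff (by positivity) (by positivity)]
      ring
    have hC : hahnC N α (-2 * (N : ℝ) - 2 - α) i
        = (i : ℝ) * (i - 2 * N - 2 - α) / (2 * (2 * (i : ℝ) - 2 * N - 1)) := by
      rw [hahnC]
      split_ifs with h0
      · simp [h0]
      rw [show (2 * (i : ℝ) + α + (-2 * (N : ℝ) - 2 - α) + 1) = 2 * (i : ℝ) - 2 * N - 1 by ring,
        show (2 * (i : ℝ) + α + (-2 * (N : ℝ) - 2 - α)) = 2 * ((i : ℝ) - N - 1) by ring,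
        div_eq_div_iff (by positivity) (by positivity)]
      ring
    rw [hA, hC, ← add_div, div_eq_div_iff (by positivity) (by norm_num)]
    ring
  · rw [hahnA, if_pos rfl, hahnC, if_neg hN0,
      show (2 * (N : ℝ) + α + (-2 * (N : ℝ) - 2 - α) + 1) = -1 by ring,
      show (2 * (N : ℝ) + α + (-2 * (N : ℝ) - 2 - α)) = -2 by ring]
    ring
end

section
/- Let n ≥ 2 be an integer, ω > 0, c > 0, and q > 0 with q ≠ 1, and let A be the n×n real symmetric matrix with diagonal entries A_{rr} = ω² and off-diagonal entries A_{r,r+1} = A_{r+1,r} = −c√(q^{r+1−2n}(1−q^r)(1−q^{n−r})) for r = 1,…,n−1 (all other entries zero). Then A is positive definite if and only if c·|1 − q^{1−n}| < ω²; equivalently, for q > 1 the condition is c(1 − q^{1−n}) < ω², and for 0 < q < 1 it is c(q^{1−n} − 1) < ω². -/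
open Finset Matrix

/-- Quadratic form of a tridiagonal matrix with constant diagonal. -/
lemma tridiag_form (d : ℝ) (e x : ℕ → ℝ) (m : ℕ) :
    ∑ i ∈ range (m + 1), ∑ j ∈ range (m + 1), x i *
      ((if i = j then d else if i + 1 = j then e i else if j + 1 = i then e j else 0) * x j)
      = d * ∑ i ∈ range (m + 1), x i ^ 2 + 2 * ∑ i ∈ range m, e i * (x i * x (i + 1)) := by
  induction m with
  | zero => simp; ring
  | succ k ih =>
    rw [Finset.sum_range_succ _ (k + 1)]
    simp_rw [Finset.sum_range_succ _ (k + 1)]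
    rw [Finset.sum_add_distrib, ih]
    have h1 : ∑ i ∈ range (k + 1), x i * ((if i = k + 1 then d else if i + 1 = k + 1 then e i
        else if k + 1 + 1 = i then e (k + 1) else 0) * x (k + 1)) = x k * (e k * x (k + 1)) := by
      rw [Finset.sum_range_succ, Finset.sum_eq_zero]
      · simp
      · intro i hi
        have := Finset.mem_range.1 hi
        rw [if_neg (by omega), if_neg (by omega), if_neg (by omega)]; simp
    have h2 : ∑ j ∈ range (k + 1), x (k + 1) * ((if k + 1 = j then d
        else if k + 1 + 1 = j then e (k + 1)
        else if j + 1 = k + 1 then e j else 0) * x j) = x k * (e k * x (k + 1)) := by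
      rw [Finset.sum_range_succ, Finset.sum_eq_zero]
      · rw [if_neg (by omega), if_neg (by omega), if_pos rfl]; ring
      · intro i hi
        have := Finset.mem_range.1 hi
        rw [if_neg (by omega), if_neg (by omega), if_neg (by omega)]; simp
    rw [h1, h2, Finset.sum_range_succ (fun i => e i * (x i * x (i + 1))) k]
    simp only [if_true]
    ring

/-- Factorised form: completing squares. -/
lemma sos_form (d c L : ℝ) (a b x : ℕ → ℝ) (m : ℕ) (ha : ∀ i ≤ m, 0 ≤ a i) (hb : ∀ i, 0 ≤ b i)
    (hab : ∀ i, a i + b i = L) (h0 : b 0 = 0) (hm : a m = 0) :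
    d * ∑ i ∈ range (m + 1), x i ^ 2
      + 2 * ∑ i ∈ range m, (-c * Real.sqrt (a i * b (i + 1))) * (x i * x (i + 1))
    = (d - c * L) * ∑ i ∈ range (m + 1), x i ^ 2
      + c * ∑ i ∈ range m, (√(a i) * x i - √(b (i + 1)) * x (i + 1)) ^ 2 := by
  have h : ∑ i ∈ range m, (√(a i) * x i - √(b (i + 1)) * x (i + 1)) ^ 2
      = L * ∑ i ∈ range (m + 1), x i ^ 2
        - 2 * ∑ i ∈ range m, Real.sqrt (a i * b (i + 1)) * (x i * x (i + 1)) := by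
    have e1 : L * ∑ i ∈ range (m + 1), x i ^ 2
        = ∑ i ∈ range (m + 1), a i * x i ^ 2 + ∑ i ∈ range (m + 1), b i * x i ^ 2 := by
      rw [← Finset.sum_add_distrib, Finset.mul_sum]
      exact Finset.sum_congr rfl fun i _ => by rw [← hab i]; ring
    rw [e1, Finset.sum_range_succ, Finset.sum_range_succ' (fun i => b i * x i ^ 2), h0, hm,
      Finset.mul_sum]
    simp only [zero_mul, add_zero]
    rw [← Finset.sum_add_distrib, ← Finset.sum_sub_distrib]
    refine Finset.sum_congr rfl fun i hi => ?_
    have hi' := ha i (Finset.mem_range.1 hi).le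
    rw [Real.sqrt_mul hi']
    have s1 := Real.sq_sqrt hi'
    have s2 := Real.sq_sqrt (hb (i + 1))
    linear_combination x i ^ 2 * s1 + x (i + 1) ^ 2 * s2
  rw [h]
  simp only [neg_mul, Finset.sum_neg_distrib, mul_assoc, ← Finset.mul_sum]
  ring

lemma posDef_aux (m : ℕ) (d c L : ℝ) (hc : 0 < c) (a b : ℕ → ℝ)
    (ha : ∀ i ≤ m, 0 ≤ a i) (hb : ∀ i, 0 ≤ b i) (hb' : ∀ i, 0 < b (i + 1))
    (hab : ∀ i, a i + b i = L) (h0 : b 0 = 0) (hm : a m = 0)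
    (A : Matrix (Fin (m + 1)) (Fin (m + 1)) ℝ)
    (hA : ∀ i j : Fin (m + 1), A i j =
      if (i : ℕ) = (j : ℕ) then d
      else if (i : ℕ) + 1 = (j : ℕ) then -c * Real.sqrt (a i * b (i + 1))
      else if (j : ℕ) + 1 = (i : ℕ) then -c * Real.sqrt (a j * b (j + 1))
      else 0) : A.PosDef ↔ c * L < d := by
  have key : ∀ y : ℕ → ℝ, (fun i : Fin (m + 1) => y i) ⬝ᵥ (A *ᵥ (fun i : Fin (m + 1) => y i))
      = (d - c * L) * ∑ i ∈ range (m + 1), y i ^ 2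
      + c * ∑ i ∈ range m, (√(a i) * y i - √(b (i + 1)) * y (i + 1)) ^ 2 := by
    intro y
    rw [← sos_form d c L a b y m ha hb hab h0 hm,
      ← tridiag_form d (fun i => -c * Real.sqrt (a i * b (i + 1))) y m]
    simp only [dotProduct, mulVec, hA, Finset.mul_sum]
    rw [← Fin.sum_univ_eq_sum_range (fun i => ∑ j ∈ range (m + 1), y i *
      ((if i = j then d else if i + 1 = j then -c * Real.sqrt (a i * b (i + 1))
        else if j + 1 = i then -c * Real.sqrt (a j * b (j + 1)) else 0) * y j))]
    refine Finset.sum_congr rfl fun i _ => ?_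
    rw [← Fin.sum_univ_eq_sum_range (fun j => y i *
      ((if (i : ℕ) = j then d else if (i : ℕ) + 1 = j then -c * Real.sqrt (a i * b (i + 1))
        else if j + 1 = i then -c * Real.sqrt (a j * b (j + 1)) else 0) * y j))]
  have herm : A.IsHermitian := by
    ext i j
    simp only [conjTranspose_apply, star_trivial, hA]
    by_cases h1 : (i : ℕ) = j
    · simp [h1]
    · by_cases h2 : (i : ℕ) + 1 = j
      · rw [if_neg (by omega), if_neg (by omega), if_pos h2, if_neg h1, if_pos h2]
      · rw [if_neg (fun h => h1 h.symm), if_neg h1, if_neg h2, if_neg h2]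
  rw [Matrix.posDef_iff_dotProduct_mulVec]
  constructor
  · rintro ⟨-, h⟩
    let v : ℕ → ℝ := fun k => ∏ i ∈ range k, (√(a i) / √(b (i + 1)))
    have hv0 : v 0 = 1 := by simp [v]
    have hne : (fun i : Fin (m + 1) => v i) ≠ 0 := by
      intro h
      have := congrFun h 0
      simp [hv0] at this
    have hp := h hne
    rw [star_trivial, key v] at hp
    have hz : ∑ i ∈ range m, (√(a i) * v i - √(b (i + 1)) * v (i + 1)) ^ 2 = 0 := by
      refine Finset.sum_eq_zero fun i _ => ?_
      have hbi : √(b (i + 1)) ≠ 0 := (Real.sqrt_pos.2 (hb' i)).ne'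
      have : v (i + 1) = v i * (√(a i) / √(b (i + 1))) := Finset.prod_range_succ _ _
      rw [this]
      field_simp
      ring
    rw [hz, mul_zero, add_zero] at hp
    have := pos_of_mul_pos_left hp (Finset.sum_nonneg fun i _ => sq_nonneg (v i))
    linarith
  · intro h
    refine ⟨herm, fun x hx => ?_⟩
    let y : ℕ → ℝ := fun k => if h : k < m + 1 then x ⟨k, h⟩ else 0
    have hy : (fun i : Fin (m + 1) => y i) = x := by
      ext i; exact dif_pos i.2
    rw [star_trivial, ← hy, key y]
    have hs : 0 < ∑ i ∈ range (m + 1), y i ^ 2 := by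
      obtain ⟨i, hi⟩ := Function.ne_iff.1 hx
      refine Finset.sum_pos' (fun i _ => sq_nonneg _) ⟨i, Finset.mem_range.2 i.2, ?_⟩
      have : y i = x i := congrFun hy i
      rw [this]
      exact sq_pos_of_ne_zero hi
    have h2 : 0 ≤ ∑ i ∈ range m, (√(a i) * y i - √(b (i + 1)) * y (i + 1)) ^ 2 :=
      Finset.sum_nonneg fun i _ => sq_nonneg _
    have : 0 < (d - c * L) * ∑ i ∈ range (m + 1), y i ^ 2 := mul_pos (by linarith) hs
    have := mul_nonneg hc.le h2
    linarith

/-- the interaction matrix of the Hamiltonian with dual q-Krawtchouk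
interaction (diagonal entries `ω²`, off-diagonal entries
`-c√(q^{r+1-2n}(1-q^r)(1-q^{n-r}))` for `r = 1,…,n-1`; the index `i : Fin n`
corresponds to `r = i+1`) is positive definite if and only if `c|1 - q^{1-n}| < ω²`;
equivalently, for `q > 1` the condition is `c(1 - q^{1-n}) < ω²`, and for `0 < q < 1`
it is `c(q^{1-n} - 1) < ω²`. -/
theorem dqKrawtchouk_interaction_posDef_iff (n : ℕ) (hn : 2 ≤ n) (ω c q : ℝ)
    (hω : 0 < ω) (hc : 0 < c) (hq : 0 < q) (hq1 : q ≠ 1)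
    (A : Matrix (Fin n) (Fin n) ℝ)
    (hA : ∀ i j : Fin n, A i j =
      if (i : ℕ) = (j : ℕ) then ω ^ 2
      else if (i : ℕ) + 1 = (j : ℕ) then
        -c * Real.sqrt (q ^ (((i : ℕ) : ℤ) + 2 - 2 * (n : ℤ)) *
          (1 - q ^ ((i : ℕ) + 1)) * (1 - q ^ (n - ((i : ℕ) + 1))))
      else if (j : ℕ) + 1 = (i : ℕ) then
        -c * Real.sqrt (q ^ (((j : ℕ) : ℤ) + 2 - 2 * (n : ℤ)) *
          (1 - q ^ ((j : ℕ) + 1)) * (1 - q ^ (n - ((j : ℕ) + 1))))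
      else 0) :
    (A.PosDef ↔ c * |1 - q ^ (1 - (n : ℤ))| < ω ^ 2) ∧
      (1 < q → (A.PosDef ↔ c * (1 - q ^ (1 - (n : ℤ))) < ω ^ 2)) ∧
      (q < 1 → (A.PosDef ↔ c * (q ^ (1 - (n : ℤ)) - 1) < ω ^ 2)) := by

  obtain ⟨m, rfl⟩ : ∃ m, n = m + 1 := ⟨n - 1, by omega⟩
  have hexp : (1 - ((m + 1 : ℕ) : ℤ)) = -(m : ℤ) := by push_cast; ring
  rw [hexp]
  have hQ : (0 : ℝ) < q ^ (-(m : ℤ)) := zpow_pos hq _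
  have hQm : q ^ (-(m : ℤ)) * q ^ m = 1 := by
    rw [_root_.zpow_neg, zpow_natCast, inv_mul_cancel₀ (pow_pos hq m).ne']
  have hm1 : m ≠ 0 := by omega
  -- identity for the squared off-diagonal entries
  have hid : ∀ i : ℕ, i < m → q ^ ((i : ℤ) + 2 - 2 * ((m + 1 : ℕ) : ℤ)) *
      (1 - q ^ (i + 1)) * (1 - q ^ (m + 1 - (i + 1)))
      = (q ^ (-(m : ℤ)) * (q ^ i - q ^ m)) * (q ^ (-(m : ℤ)) * (1 - q ^ (i + 1))) := by
    intro i hi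
    obtain ⟨k, rfl⟩ : ∃ k, m = i + k := ⟨m - i, by omega⟩
    have e1 : (i : ℤ) + 2 - 2 * ((i + k + 1 : ℕ) : ℤ)
        = (i : ℤ) + -((i + k : ℕ) : ℤ) + -((i + k : ℕ) : ℤ) := by push_cast; ring
    have e2 : i + k + 1 - (i + 1) = k := by omega
    rw [e1, e2, zpow_add₀ hq.ne', zpow_add₀ hq.ne', zpow_natCast]
    ring
  -- main claim for a sign `s`
  have main : ∀ s : ℝ, s * s = 1 → (∀ i, i ≤ m → 0 ≤ s * (q ^ i - q ^ m)) →
      (∀ i : ℕ, 0 < s * (1 - q ^ (i + 1))) →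
      (A.PosDef ↔ c * (s * (q ^ (-(m : ℤ)) - 1)) < ω ^ 2) := by
    intro s hs h1 h2
    refine posDef_aux m (ω ^ 2) c _ hc (fun i => q ^ (-(m : ℤ)) * (s * (q ^ i - q ^ m)))
      (fun i => q ^ (-(m : ℤ)) * (s * (1 - q ^ i))) (fun i hi => mul_nonneg hQ.le (h1 i hi)) ?_
      (fun i => mul_pos hQ (h2 i)) ?_ (by simp) (by simp) A ?_
    · intro i
      cases i with
      | zero => simp
      | succ i => exact (mul_pos hQ (h2 i)).le
    · intro i
      linear_combination (-s) * hQm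
    · intro i j
      have hid' : ∀ i : ℕ, i < m → q ^ ((i : ℤ) + 2 - 2 * ((m + 1 : ℕ) : ℤ)) *
          (1 - q ^ (i + 1)) * (1 - q ^ (m + 1 - (i + 1)))
          = (q ^ (-(m : ℤ)) * (s * (q ^ i - q ^ m)))
            * (q ^ (-(m : ℤ)) * (s * (1 - q ^ (i + 1)))) := by
        intro i hi
        rw [hid i hi]
        linear_combination (-((q ^ (-(m : ℤ)) * (q ^ i - q ^ m))
          * (q ^ (-(m : ℤ)) * (1 - q ^ (i + 1))))) * hs
      rw [hA]
      split_ifs with g1 g2 g3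
      · rfl
      · rw [hid' i (by omega)]
      · rw [hid' j (by omega)]
      · rfl
  have hgt : 1 < q → (A.PosDef ↔ c * (1 - q ^ (-(m : ℤ))) < ω ^ 2) := by
    intro h
    have := main (-1) (by norm_num)
      (fun i hi => by have := pow_le_pow_right₀ h.le hi; linarith)
      (fun i => by have := one_lt_pow₀ h (Nat.succ_ne_zero i); simp only [Nat.succ_eq_add_one] at this; linarith)
    rw [this]
    ring_nf
  have hlt : q < 1 → (A.PosDef ↔ c * (q ^ (-(m : ℤ)) - 1) < ω ^ 2) := by
    intro h
    have := main 1 (by norm_num)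
      (fun i hi => by have := pow_le_pow_of_le_one hq.le h.le hi; linarith)
      (fun i => by have := pow_lt_one₀ hq.le h (Nat.succ_ne_zero i); simp only [Nat.succ_eq_add_one] at this; linarith)
    rw [this, one_mul]
  refine ⟨?_, hgt, hlt⟩
  rcases lt_or_gt_of_ne hq1 with h | h
  · rw [hlt h, abs_of_nonpos, neg_sub]
    have := pow_lt_one₀ hq.le h hm1
    nlinarith
  · rw [hgt h, abs_of_nonneg]
    have := one_lt_pow₀ h hm1
    nlinarith
end
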